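/- Let σ² and Py be real numbers with 0 < σ² < Py, and define the threshold φ* := ((Py * σ²)/(Py - σ²)) * Real.log (Py/σ²). Then for every y : ℝ, gaussianPDFReal 0 Py y ≥ gaussianPDFReal 0 σ² y if and only if y² ≥ φ*. In other words, the likelihood ratio test p₁(y)/p₀(y) ≥ 1 between the warden's observation densities under the two hypotheses is equivalent to the energy-detector rule y² ≥ φ*, where, writing Py = P_x + σ_w², φ* = ((P_x + σ_w²)σ_w²/P_x)·ln((P_x + σ_w²)/σ_w²). -/

import Mathlib

open MeasureTheory ProbabilityTheory
open scoped ENNReal NNReal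

/-- The threshold `φ*` of the energy detector that compares two Gaussian densities of variances
`v ≠ w` with a common mean: the squared deviation from the mean at which the densities agree.
At `v = w` division by zero makes it `0`. -/
noncomputable def energyThreshold (v w : ℝ) : ℝ :=
  v * w / (v - w) * Real.log (v / w)

lemma log_gaussianPDFReal (μ : ℝ) {v : ℝ≥0} (hv : v ≠ 0) (x : ℝ) :
    Real.log (gaussianPDFReal μ v x) =
      -(Real.log (2 * Real.pi * v) / 2) - (x - μ) ^ 2 / (2 * v) := by
  have two_pi_mul_pos : 0 < 2 * Real.pi * v := mul_pos Real.two_pi_pos (NNReal.coe_pos.2 hv.pos)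
  rw [gaussianPDFReal,
    Real.log_mul (inv_ne_zero (Real.sqrt_ne_zero'.2 two_pi_mul_pos)) (Real.exp_ne_zero _),
    Real.log_inv, Real.log_sqrt two_pi_mul_pos.le, Real.log_exp, neg_div, ← sub_eq_add_neg]

lemma log_gaussianPDFReal_div_gaussianPDFReal (μ ν : ℝ) {v w : ℝ≥0} (hv : v ≠ 0) (hw : w ≠ 0)
    (x : ℝ) :
    Real.log (gaussianPDFReal μ v x / gaussianPDFReal ν w x) =
      (x - ν) ^ 2 / (2 * w) - (x - μ) ^ 2 / (2 * v) - Real.log (v / w) / 2 := by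
  have hv_real : (v : ℝ) ≠ 0 := NNReal.coe_ne_zero.2 hv
  have hw_real : (w : ℝ) ≠ 0 := NNReal.coe_ne_zero.2 hw
  rw [Real.log_div (gaussianPDFReal_pos μ v x hv).ne' (gaussianPDFReal_pos ν w x hw).ne',
    log_gaussianPDFReal μ hv, log_gaussianPDFReal ν hw, Real.log_mul Real.two_pi_pos.ne' hv_real,
    Real.log_mul Real.two_pi_pos.ne' hw_real, Real.log_div hv_real hw_real]
  ring

lemma log_gaussianPDFReal_div_eq_mul_sub_energyThreshold (μ : ℝ) {v w : ℝ≥0} (hv : v ≠ 0)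
    (hw : w ≠ 0) (hvw : v ≠ w) (x : ℝ) :
    Real.log (gaussianPDFReal μ v x / gaussianPDFReal μ w x) =
      ((v : ℝ) - w) / (2 * v * w) * ((x - μ) ^ 2 - energyThreshold v w) := by
  have hv_real : (v : ℝ) ≠ 0 := NNReal.coe_ne_zero.2 hv
  have hw_real : (w : ℝ) ≠ 0 := NNReal.coe_ne_zero.2 hw
  have hsub : (v : ℝ) - w ≠ 0 := sub_ne_zero.2 (NNReal.coe_injective.ne hvw)
  rw [log_gaussianPDFReal_div_gaussianPDFReal μ μ hv hw, energyThreshold]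
  field_simp

lemma gaussianPDFReal_le_gaussianPDFReal_iff_energyThreshold_le (μ : ℝ) {v w : ℝ≥0} (hw : w ≠ 0)
    (hwv : w < v) (x : ℝ) :
    gaussianPDFReal μ w x ≤ gaussianPDFReal μ v x ↔ energyThreshold v w ≤ (x - μ) ^ 2 := by
  have hv : v ≠ 0 := (hw.pos.trans hwv).ne'
  have hpdf_v : 0 < gaussianPDFReal μ v x := gaussianPDFReal_pos μ v x hv
  have hpdf_w : 0 < gaussianPDFReal μ w x := gaussianPDFReal_pos μ w x hw
  have hslope : 0 < ((v : ℝ) - w) / (2 * v * w) := by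
    have hsub : (0 : ℝ) < v - w := sub_pos.2 hwv
    positivity
  calc gaussianPDFReal μ w x ≤ gaussianPDFReal μ v x
      ↔ 0 ≤ Real.log (gaussianPDFReal μ v x / gaussianPDFReal μ w x) := by
        rw [Real.log_nonneg_iff (div_pos hpdf_v hpdf_w), one_le_div hpdf_w]
    _ ↔ 0 ≤ ((v : ℝ) - w) / (2 * v * w) * ((x - μ) ^ 2 - energyThreshold v w) := by
        rw [log_gaussianPDFReal_div_eq_mul_sub_energyThreshold μ hv hw hwv.ne']
    _ ↔ energyThreshold v w ≤ (x - μ) ^ 2 := by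
        rw [mul_nonneg_iff_of_pos_left hslope, sub_nonneg]

/-- The likelihood ratio test `p₁(y)/p₀(y) ≥ 1` is equivalent to the energy-detector rule
`y² ≥ φ*` with `φ* = ((Py·σ²)/(Py − σ²))·log(Py/σ²)`. -/
theorem stmt_16 (σ2 Py : ℝ≥0) (hσ : 0 < σ2) (hlt : σ2 < Py) (φ : ℝ)
    (hφ : φ = (((Py : ℝ) * (σ2 : ℝ)) / ((Py : ℝ) - (σ2 : ℝ))) * Real.log ((Py : ℝ) / (σ2 : ℝ))) :
    ∀ y : ℝ, gaussianPDFReal 0 Py y ≥ gaussianPDFReal 0 σ2 y ↔ y ^ 2 ≥ φ := by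
  intro y
  rw [hφ, ge_iff_le, ge_iff_le, ← energyThreshold,
    gaussianPDFReal_le_gaussianPDFReal_iff_energyThreshold_le 0 hσ.ne' hlt, sub_zero]
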